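/- For every number of types k ≥ 2 and every intolerance parameter τ ∈ (0,1), there exist a finite simple graph G = (V,E), a set A of agents with |A| < |V| partitioned into k types, and an injective placement p₀ : A → V such that no finite sequence of improving jumps of the one-versus-all jump Schelling game (1-k-JSG) with parameter τ starting from p₀ ends in a jump-stable placement; in particular, the 1-k-JSG is not weakly acyclic on arbitrary networks for any τ ∈ (0,1). -/

import Mathlib

open Finset
open scoped Classical

noncomputable section

namespace Schelling

variable {V A : Type*} [Fintype V] [Fintype A] {k : ℕ}

/-- The set of neighbors of agent `a` under placement `p`. -/
def nbrs (G : SimpleGraph V) (p : A → V) (a : A) : Finset A :=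
  Finset.univ.filter fun b => G.Adj (p a) (p b)

/-- `|N⁺_p(a)|`: the number of neighbors of `a` under `p` having the same type as `a`. -/
def posCount (G : SimpleGraph V) (t : A → Fin k) (p : A → V) (a : A) : ℕ :=
  (Finset.univ.filter fun b => G.Adj (p a) (p b) ∧ t b = t a).card

/-- One-versus-all `|N⁻_p(a)|`: the number of neighbors of `a` whose type differs from `t a`. -/
def negCountAll (G : SimpleGraph V) (t : A → Fin k) (p : A → V) (a : A) : ℕ :=
  (Finset.univ.filter fun b => G.Adj (p a) (p b) ∧ t b ≠ t a).card

/-- One-versus-one `|N⁻_p(a)|`: the size of a largest set of neighbors of `a`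
of one common type different from `t a`. -/
def negCountOne (G : SimpleGraph V) (t : A → Fin k) (p : A → V) (a : A) : ℕ :=
  (Finset.univ.filter fun T : Fin k => T ≠ t a).sup fun T =>
    (Finset.univ.filter fun b => G.Adj (p a) (p b) ∧ t b = T).card

/-- The cost of agent `a` in the one-versus-all version. -/
def costAll (G : SimpleGraph V) (t : A → Fin k) (τ : ℝ) (p : A → V) (a : A) : ℝ :=
  if nbrs G p a = ∅ then τ
  else max 0 (τ - (posCount G t p a : ℝ) /
    ((posCount G t p a : ℝ) + (negCountAll G t p a : ℝ)))

/-- The cost of agent `a` in the one-versus-one version. -/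
def costOne (G : SimpleGraph V) (t : A → Fin k) (τ : ℝ) (p : A → V) (a : A) : ℝ :=
  if nbrs G p a = ∅ then τ
  else max 0 (τ - (posCount G t p a : ℝ) /
    ((posCount G t p a : ℝ) + (negCountOne G t p a : ℝ)))

/-- A swap of the (distinct) agents `a` and `b` turning placement `p` into `q`,
which strictly decreases the cost of both agents (cost function `c`). -/
def SwapMove (c : (A → V) → A → ℝ) (p q : A → V) (a b : A) : Prop :=
  a ≠ b ∧ q = p ∘ (Equiv.swap a b) ∧ c q a < c p a ∧ c q b < c p b

/-- `q` is obtained from `p` by an improving swap. -/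
def ImprovingSwap (c : (A → V) → A → ℝ) (p q : A → V) : Prop :=
  ∃ a b, SwapMove c p q a b

/-- A placement is swap-stable if it admits no improving swap. -/
def SwapStable (c : (A → V) → A → ℝ) (p : A → V) : Prop :=
  ∀ q, ¬ ImprovingSwap c p q

/-- Some finite sequence of improving swaps starting at `p₀` ends in a swap-stable placement. -/
def ReachesStableSwap (c : (A → V) → A → ℝ) (p₀ : A → V) : Prop :=
  ∃ (n : ℕ) (q : ℕ → A → V), q 0 = p₀ ∧
    (∀ i < n, ImprovingSwap c (q i) (q (i + 1))) ∧ SwapStable c (q n)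

/-- A jump of agent `a` to the node `v` (unoccupied under `p`) turning placement `p`
into `q`, which strictly decreases the cost of `a` (cost function `c`). -/
def JumpMove (c : (A → V) → A → ℝ) (p q : A → V) (a : A) (v : V) : Prop :=
  (∀ b, p b ≠ v) ∧ q = Function.update p a v ∧ c q a < c p a

/-- `q` is obtained from `p` by an improving jump. -/
def ImprovingJump (c : (A → V) → A → ℝ) (p q : A → V) : Prop :=
  ∃ a v, JumpMove c p q a v

/-- A placement is jump-stable if it admits no improving jump. -/
def JumpStable (c : (A → V) → A → ℝ) (p : A → V) : Prop :=
  ∀ q, ¬ ImprovingJump c p q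

/-- Some finite sequence of improving jumps starting at `p₀` ends in a jump-stable placement. -/
def ReachesStableJump (c : (A → V) → A → ℝ) (p₀ : A → V) : Prop :=
  ∃ (n : ℕ) (q : ℕ → A → V), q 0 = p₀ ∧
    (∀ i < n, ImprovingJump c (q i) (q (i + 1))) ∧ JumpStable c (q n)

/-- The placement cost: the number of discontent agents (one-versus-all cost). -/
def placementCost (G : SimpleGraph V) (t : A → Fin k) (τ : ℝ) (p : A → V) : ℕ :=
  (Finset.univ.filter fun a => costAll G t τ p a ≠ 0).card

/-- A graph is `Δ`-regular if every node has exactly `Δ` neighbors. -/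
def IsRegular (G : SimpleGraph V) (Δ : ℕ) : Prop :=
  ∀ v : V, (Finset.univ.filter fun u => G.Adj v u).card = Δ

/-!
Two movers of type `0` share three sites `0`, `1`, `2`, and all other agents are either content or
alone of their type, so that they never jump. A hub of type `0` is next to sites `0` and `1`, sites
`1` and `2` are adjacent, and the sites have `n`, `2 * n + 1` and `0` neighbors in a clique of
`2 * n + 1` agents of type `1`. Whenever site `v` is vacant, the mover on `v + 1` (modulo `3`)
improves by jumping to `v`: her fraction of same-type neighbors grows

* from `2 / (2 * n + 3)` to `1 / (n + 1)` if `v = 0`,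
* from `0` to `1 / (2 * n + 2)` if `v = 1`,
* from `1 / (n + 1)` to `1` if `v = 2`.

Here `n` is so large that `1 / (n + 1) < τ ≤ n / (n + 1)`. The first inequality makes the jumping
mover discontent. The second one keeps the clique content, since each of its agents has `2 * n`
neighbors of her own type and at most two others.
-/

section Dynamics

variable {V A W B : Type*}

theorem improvingJump_update [DecidableEq A] {c : (A → V) → A → ℝ} {p : A → V} {a : A} {v : V}
    (hv : ∀ b, p b ≠ v) (hlt : c (Function.update p a v) a < c p a) :
    ImprovingJump c p (Function.update p a v) :=
  ⟨a, v, hv, by congr!, hlt⟩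

theorem ImprovingJump.injective {c : (A → V) → A → ℝ} {p q : A → V} (hp : Function.Injective p)
    (h : ImprovingJump c p q) : Function.Injective q := by
  obtain ⟨a, v, hv, rfl, -⟩ := h
  intro b b' hbb'
  grind [Function.Injective, Function.update_apply]

theorem not_reachesStableJump_of_invariant {c : (A → V) → A → ℝ} {I : (A → V) → Prop}
    (hstep : ∀ p q, I p → ImprovingJump c p q → I q)
    (hmove : ∀ p, I p → ∃ q, ImprovingJump c p q) {p₀ : A → V} (h₀ : I p₀) :
    ¬ ReachesStableJump c p₀ := by
  rintro ⟨n, q, rfl, hq, hstable⟩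
  have hI : ∀ i ≤ n, I (q i) := by
    intro i
    induction i with
    | zero => exact fun _ => h₀
    | succ i ih => exact fun hi => hstep _ _ (ih (by lia)) (hq i hi)
  obtain ⟨r, hr⟩ := hmove _ (hI n le_rfl)
  exact hstable r hr

theorem improvingJump_arrowCongr_iff {c : (A → V) → A → ℝ} {d : (B → W) → B → ℝ} {f : B ≃ A}
    {e : W ≃ V} (hcd : ∀ p b, c (f.arrowCongr e p) (f b) = d p b) {p q : B → W} :
    ImprovingJump c (f.arrowCongr e p) (f.arrowCongr e q) ↔ ImprovingJump d p q := by
  have hupdate (b : B) (w : W) :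
      Function.update (f.arrowCongr e p) (f b) (e w) =
        f.arrowCongr e (Function.update p b w) := by
    ext a
    simp [Function.update_apply, apply_ite e, ← Equiv.symm_apply_eq]
  simp only [ImprovingJump, JumpMove, f.surjective.exists, e.surjective.exists,
    f.surjective.forall, hupdate, hcd, (f.arrowCongr e).apply_eq_iff_eq]
  simp

theorem ReachesStableJump.arrowCongr {c : (A → V) → A → ℝ} {d : (B → W) → B → ℝ} {f : B ≃ A}
    {e : W ≃ V} (hcd : ∀ p b, c (f.arrowCongr e p) (f b) = d p b) {p₀ : B → W}
    (h : ReachesStableJump d p₀) : ReachesStableJump c (f.arrowCongr e p₀) := by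
  obtain ⟨n, q, rfl, hq, hstable⟩ := h
  refine ⟨n, fun i => f.arrowCongr e (q i), rfl,
    fun i hi => (improvingJump_arrowCongr_iff hcd).2 (hq i hi), ?_⟩
  refine (f.arrowCongr e).surjective.forall.2 fun r hr => ?_
  exact hstable r ((improvingJump_arrowCongr_iff hcd).1 hr)

end Dynamics

section SettledResidents

variable {M S R : Type*}

/-- The cost function of the game played by the movers `M` on the sites `S` alone, when the
residents are nodes and agents at once, each of them staying at home. -/
def moverCost (c : (M ⊕ R → S ⊕ R) → M ⊕ R → ℝ) (m : M → S) (i : M) : ℝ :=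
  c (Sum.map m id) (.inl i)

theorem update_sumMap_inl {_ : DecidableEq M} {_ : DecidableEq (M ⊕ R)} (m : M → S) (i : M)
    (s : S) :
    Function.update (Sum.map m id : M ⊕ R → S ⊕ R) (.inl i) (.inl s) =
      Sum.map (Function.update m i s) id := by
  change Function.update (Sum.elim (Sum.inl ∘ m) Sum.inr) _ _ = Sum.elim (Sum.inl ∘ _) Sum.inr
  rw [Sum.update_elim_inl, Function.comp_update]

theorem ImprovingJump.sumMap {c : (M ⊕ R → S ⊕ R) → M ⊕ R → ℝ} {m m' : M → S}
    (h : ImprovingJump (moverCost c) m m') :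
    ImprovingJump c (Sum.map m id) (Sum.map m' id) := by
  obtain ⟨i, s, hs, rfl, hlt⟩ := h
  exact ⟨.inl i, .inl s, by simpa using hs, (update_sumMap_inl m i s).symm, hlt⟩

theorem ImprovingJump.exists_moverCost {c : (M ⊕ R → S ⊕ R) → M ⊕ R → ℝ} {m : M → S}
    {q : M ⊕ R → S ⊕ R} (hres : ∀ r q, c (Sum.map m id) (.inr r) ≤ c q (.inr r))
    (h : ImprovingJump c (Sum.map m id) q) :
    ∃ m', ImprovingJump (moverCost c) m m' ∧ q = Sum.map m' id := by
  obtain ⟨i | r, s | r', hfree, rfl, hlt⟩ := h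
  · rw [update_sumMap_inl] at hlt ⊢
    exact ⟨_, ⟨i, s, fun j hj => hfree (.inl j) (by simp [hj]), rfl, hlt⟩, rfl⟩
  · exact absurd rfl (hfree (.inr r'))
  all_goals exact absurd hlt (hres r _).not_gt

theorem not_reachesStableJump_sumMap {c : (M ⊕ R → S ⊕ R) → M ⊕ R → ℝ}
    (hres : ∀ m : M → S, Function.Injective m →
      ∀ r q, c (Sum.map m id) (.inr r) ≤ c q (.inr r))
    (hmov : ∀ m : M → S, Function.Injective m → ∃ m', ImprovingJump (moverCost c) m m')
    {m₀ : M → S} (hm₀ : Function.Injective m₀) :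
    ¬ ReachesStableJump c (Sum.map m₀ id) := by
  apply not_reachesStableJump_of_invariant
    (I := fun p => ∃ m : M → S, Function.Injective m ∧ p = Sum.map m id)
  · rintro _ q ⟨m, hm, rfl⟩ h
    obtain ⟨m', hmm', rfl⟩ := h.exists_moverCost (hres m hm)
    exact ⟨m', hmm'.injective hm, rfl⟩
  · rintro _ ⟨m, hm, rfl⟩
    exact (hmov m hm).imp' (Sum.map · id) fun _ => ImprovingJump.sumMap
  · exact ⟨m₀, hm₀, rfl⟩

end SettledResidents

section Cost

variable {V A W B : Type*} [Fintype A] [Fintype B] {k : ℕ} {G : SimpleGraph V} {t : A → Fin k}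
  {τ : ℝ} {p q : A → V} {a : A}

/-- The fraction of the neighbors of `a` that share her type; it is `0 / 0 = 0` when `a` has no
neighbors, which agrees with the cost `τ` of an isolated agent. -/
def sameTypeRatio (G : SimpleGraph V) (t : A → Fin k) (p : A → V) (a : A) : ℝ :=
  posCount G t p a / (posCount G t p a + negCountAll G t p a)

theorem sameTypeRatio_nonneg : 0 ≤ sameTypeRatio G t p a := by
  unfold sameTypeRatio
  positivity

theorem sameTypeRatio_eq_zero (h : ∀ b, G.Adj (p a) (p b) → t b ≠ t a) :
    sameTypeRatio G t p a = 0 := by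
  have hpos : posCount G t p a = 0 := by
    rw [posCount, card_eq_zero, filter_eq_empty_iff]
    exact fun b _ hb => h b hb.1 hb.2
  simp [sameTypeRatio, hpos]

theorem sameTypeRatio_eq_one (h : ∀ b, G.Adj (p a) (p b) → t b = t a)
    (hex : ∃ b, G.Adj (p a) (p b)) : sameTypeRatio G t p a = 1 := by
  have hneg : negCountAll G t p a = 0 := by
    rw [negCountAll, card_eq_zero, filter_eq_empty_iff]
    exact fun b _ hb => hb.2 (h b hb.1)
  have hpos : posCount G t p a ≠ 0 := by
    obtain ⟨b, hb⟩ := hex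
    exact card_ne_zero_of_mem (mem_filter.2 ⟨mem_univ b, hb, h b hb⟩)
  simp [sameTypeRatio, hneg, hpos]

theorem costAll_eq_max (hτ : 0 ≤ τ) :
    costAll G t τ p a = max 0 (τ - sameTypeRatio G t p a) := by
  rw [costAll]
  split_ifs with hnbrs
  · have hzero : sameTypeRatio G t p a = 0 := by
      refine sameTypeRatio_eq_zero fun b hb => absurd hb ?_
      exact filter_eq_empty_iff.1 hnbrs (mem_univ b)
    simp [hzero, hτ]
  · rfl

theorem costAll_nonneg (hτ : 0 ≤ τ) : 0 ≤ costAll G t τ p a :=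
  (le_max_left _ _).trans_eq (costAll_eq_max hτ).symm

theorem costAll_eq_zero (hτ : 0 ≤ τ) (h : τ ≤ sameTypeRatio G t p a) : costAll G t τ p a = 0 := by
  rw [costAll_eq_max hτ, max_eq_left (sub_nonpos.2 h)]

theorem costAll_eq_of_unique_type (hτ : 0 ≤ τ) (h : ∀ b, t b = t a → b = a) :
    costAll G t τ p a = τ := by
  have hzero : sameTypeRatio G t p a = 0 :=
    sameTypeRatio_eq_zero fun b hadj htype => G.irrefl (h b htype ▸ hadj)
  simp [costAll_eq_max hτ, hzero, hτ]

theorem costAll_lt_costAll (hτ : 0 ≤ τ) (hp : sameTypeRatio G t p a < τ)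
    (hpq : sameTypeRatio G t p a < sameTypeRatio G t q a) :
    costAll G t τ q a < costAll G t τ p a := by
  rw [costAll_eq_max hτ, costAll_eq_max hτ]
  exact max_lt (lt_max_of_lt_right (sub_pos.2 hp))
    (lt_max_of_lt_right (sub_lt_sub_left hpq τ))

theorem costAll_arrowCongr (f : B ≃ A) (e : W ≃ V) (p : B → W) (b : B) :
    costAll G t τ (f.arrowCongr e p) (f b) = costAll (G.comap e) (t ∘ f) τ p b := by
  have hnbrs : nbrs G (f.arrowCongr e p) (f b) = (nbrs (G.comap e) p b).map f := by
    ext a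
    simp [nbrs]
  have hpos : posCount G t (f.arrowCongr e p) (f b) = posCount (G.comap e) (t ∘ f) p b :=
    (card_equiv f (by simp)).symm
  have hneg : negCountAll G t (f.arrowCongr e p) (f b) = negCountAll (G.comap e) (t ∘ f) p b :=
    (card_equiv f (by simp)).symm
  simp only [costAll, hnbrs, hpos, hneg, map_eq_empty]

theorem exists_fin_not_reachesStableJump [Fintype V] {p₀ : A → V}
    (hcard : Fintype.card A < Fintype.card V) (ht : Function.Surjective t)
    (hp₀ : Function.Injective p₀) (h : ¬ ReachesStableJump (costAll G t τ) p₀) :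
    ∃ (N M : ℕ) (G : SimpleGraph (Fin N)) (t : Fin M → Fin k) (p₀ : Fin M → Fin N),
      M < N ∧ Function.Surjective t ∧ Function.Injective p₀ ∧
      ¬ ReachesStableJump (costAll G t τ) p₀ := by
  let f := (Fintype.equivFin A).symm
  let e := (Fintype.equivFin V).symm
  refine ⟨_, _, G.comap e, t ∘ f, (f.arrowCongr e).symm p₀, hcard, ht.comp f.surjective,
    e.symm.injective.comp (hp₀.comp f.injective), fun hreach => h ?_⟩
  simpa only [Equiv.apply_symm_apply] using hreach.arrowCongr (costAll_arrowCongr f e)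

end Cost

section Chase

variable {n r : ℕ} {τ : ℝ} {m : Bool → Fin 3}

/-- The agents of the counterexample that never move, identified with their home nodes: a hub of
type `0`, a clique of `2 * n + 1` agents of type `1`, and one isolated agent of each of the `r`
remaining types. -/
inductive Resident (n r : ℕ)
  | hub
  | clique (j : Fin (2 * n + 1))
  | loner (x : Fin r)

/-- The resident set as a disjoint sum, which makes it finite. -/
def Resident.equivSum (n r : ℕ) : Unit ⊕ Fin (2 * n + 1) ⊕ Fin r ≃ Resident n r where
  toFun
    | .inl _ => .hub
    | .inr (.inl j) => .clique j
    | .inr (.inr x) => .loner x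
  invFun
    | .hub => .inl ()
    | .clique j => .inr (.inl j)
    | .loner x => .inr (.inr x)
  left_inv := by rintro (_ | _ | _) <;> rfl
  right_inv := by rintro (_ | _ | _) <;> rfl

instance : Fintype (Resident n r) := Fintype.ofEquiv _ (Resident.equivSum n r)

theorem card_filter_agents (P : Bool ⊕ Resident n r → Prop) [DecidablePred P] (i : Bool) :
    (univ.filter P).card =
      (if P (.inl i) then 1 else 0) + (if P (.inl !i) then 1 else 0) +
        ((if P (.inr .hub) then 1 else 0) + ((univ.filter fun j => P (.inr (.clique j))).card +
          (univ.filter fun x => P (.inr (.loner x))).card)) := by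
  simp only [card_filter]
  rw [Fintype.sum_sum_type, Fintype.sum_bool, ← (Resident.equivSum n r).sum_comp,
    Fintype.sum_sum_type, Fintype.sum_sum_type, univ_unique, sum_singleton]
  cases i
  · rw [add_comm (ite _ _ _)]
    rfl
  · rfl

/-- The number of clique members next to each of the three sites between which the two movers
jump. -/
def cliqueDegree (n : ℕ) : Fin 3 → ℕ := ![n, 2 * n + 1, 0]

theorem card_filter_lt_cliqueDegree (n : ℕ) (s : Fin 3)
    {_ : DecidablePred fun j : Fin (2 * n + 1) => j < cliqueDegree n s} :
    (univ.filter fun j : Fin (2 * n + 1) => j < cliqueDegree n s).card = cliqueDegree n s := by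
  have hle : cliqueDegree n s ≤ 2 * n + 1 := by
    have hn : n ≤ 2 * n + 1 := by lia
    fin_cases s <;> simp [cliqueDegree, hn]
  convert Fin.card_filter_val_lt.trans (min_eq_right hle)

/-- Adjacency of the network of the counterexample. Its nodes are the three sites and the homes of
the residents. -/
def chaseAdj (n r : ℕ) : Fin 3 ⊕ Resident n r → Fin 3 ⊕ Resident n r → Prop
  | .inl s, .inl o => s ≠ 0 ∧ o ≠ 0 ∧ s ≠ o
  | .inl s, .inr .hub | .inr .hub, .inl s => s ≠ 2
  | .inl s, .inr (.clique j) | .inr (.clique j), .inl s => j < cliqueDegree n s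
  | .inr (.clique i), .inr (.clique j) => i ≠ j
  | _, _ => False

/-- The network of the counterexample. -/
def chaseGraph (n r : ℕ) : SimpleGraph (Fin 3 ⊕ Resident n r) where
  Adj := chaseAdj n r
  symm := ⟨by rintro (_ | _ | _ | _) (_ | _ | _ | _) <;> simp +contextual [chaseAdj, eq_comm]⟩
  loopless := ⟨by rintro (_ | _ | _ | _) <;> simp [chaseAdj]⟩

/-- The types in the counterexample; the two movers, indexed by `Bool`, have the type of the
hub. -/
def chaseType (n r : ℕ) : Bool ⊕ Resident n r → Fin (r + 2)
  | .inl _ | .inr .hub => 0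
  | .inr (.clique _) => 1
  | .inr (.loner x) => x.succ.succ

theorem chaseType_surjective (n r : ℕ) : Function.Surjective (chaseType n r) := by
  intro T
  cases T using Fin.cases with
  | zero => exact ⟨.inr .hub, rfl⟩
  | succ T =>
    cases T using Fin.cases with
    | zero => exact ⟨.inr (.clique 0), rfl⟩
    | succ x => exact ⟨.inr (.loner x), rfl⟩

/-- The number of neighbors of type `0` of a mover on site `s` when the other one is on `o`. -/
def siteFriends (s o : Fin 3) : ℕ :=
  (if s ≠ 0 ∧ o ≠ 0 ∧ s ≠ o then 1 else 0) + if s ≠ 2 then 1 else 0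

theorem posCount_mover (m : Bool → Fin 3) (i : Bool) :
    posCount (chaseGraph n r) (chaseType n r) (Sum.map m id) (.inl i) =
      siteFriends (m i) (m !i) := by
  rw [posCount, card_filter_agents _ i]
  simp [chaseGraph, chaseAdj, chaseType, siteFriends]

theorem negCountAll_mover (m : Bool → Fin 3) (i : Bool) :
    negCountAll (chaseGraph n r) (chaseType n r) (Sum.map m id) (.inl i) =
      cliqueDegree n (m i) := by
  rw [negCountAll, card_filter_agents _ i]
  simpa [chaseGraph, chaseAdj, chaseType] using card_filter_lt_cliqueDegree n (m i)

/-- The fraction of same-type neighbors of a mover on site `s` when the other one is on `o`. -/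
def siteRatio (n : ℕ) (s o : Fin 3) : ℝ :=
  siteFriends s o / (siteFriends s o + cliqueDegree n s)

theorem sameTypeRatio_mover (m : Bool → Fin 3) (i : Bool) :
    sameTypeRatio (chaseGraph n r) (chaseType n r) (Sum.map m id) (.inl i) =
      siteRatio n (m i) (m !i) := by
  rw [sameTypeRatio, posCount_mover, negCountAll_mover, siteRatio]

theorem siteRatio_add_one_le (n : ℕ) (v : Fin 3) : siteRatio n (v + 1) (v + 2) ≤ 1 / (n + 1) := by
  fin_cases v
  · have h : (2 : ℝ) / (2 + (2 * n + 1)) ≤ 1 / (n + 1) := by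
      rw [div_le_div_iff₀ (by positivity) (by positivity)]
      linarith
    simpa [siteRatio, siteFriends, cliqueDegree] using h
  · have h : (0 : ℝ) ≤ n + 1 := by positivity
    simpa [siteRatio, siteFriends, cliqueDegree] using h
  · simp [siteRatio, siteFriends, cliqueDegree, add_comm]

theorem siteRatio_add_one_lt (hn : 0 < n) (v : Fin 3) :
    siteRatio n (v + 1) (v + 2) < siteRatio n v (v + 2) := by
  fin_cases v
  · have h : (2 : ℝ) / (2 + (2 * n + 1)) < 1 / (1 + n) := by
      rw [div_lt_div_iff₀ (by positivity) (by positivity)]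
      linarith
    simpa [siteRatio, siteFriends, cliqueDegree] using h
  · have h : (0 : ℝ) < 1 + (2 * n + 1) := by positivity
    simpa [siteRatio, siteFriends, cliqueDegree] using h
  · have h : (1 : ℝ) / (1 + n) < 1 := by
      rw [div_lt_one (by positivity)]
      simpa using hn
    simpa [siteRatio, siteFriends, cliqueDegree] using h

theorem exists_vacant_site (hm : Function.Injective m) :
    ∃ v i, m i = v + 1 ∧ m (!i) = v + 2 := by
  have hne : m false ≠ m true := hm.ne (by simp)
  have hsites : ∀ x y : Fin 3, x ≠ y → ∃ v, (x = v + 1 ∧ y = v + 2) ∨ (y = v + 1 ∧ x = v + 2) := by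
    decide
  obtain ⟨v, h | h⟩ := hsites _ _ hne
  exacts [⟨v, false, h⟩, ⟨v, true, h⟩]

theorem exists_improvingJump_movers (hn : 0 < n) (hτ : 1 / (n + 1) < τ)
    (hm : Function.Injective m) :
    ∃ m', ImprovingJump (moverCost (costAll (chaseGraph n r) (chaseType n r) τ)) m m' := by
  have hτ0 : 0 ≤ τ := le_trans (by positivity) hτ.le
  obtain ⟨v, i, hi, hother⟩ := exists_vacant_site hm
  refine ⟨_, improvingJump_update (a := i) (v := v) ?_ (costAll_lt_costAll hτ0 ?_ ?_)⟩
  · rw [Bool.forall_bool' i, hi, hother]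
    simp
  · rw [sameTypeRatio_mover, hi, hother]
    exact (siteRatio_add_one_le n v).trans_lt hτ
  · rw [sameTypeRatio_mover, sameTypeRatio_mover, hi, hother, Function.update_self,
      Function.update_of_ne i.not_ne_self, hother]
    exact siteRatio_add_one_lt hn v

theorem sameTypeRatio_hub (hm : Function.Injective m) :
    sameTypeRatio (chaseGraph n r) (chaseType n r) (Sum.map m id) (.inr .hub) = 1 := by
  apply sameTypeRatio_eq_one
  · rintro (_ | _ | _ | _) <;> simp [chaseGraph, chaseAdj, chaseType]
  · obtain ⟨i, hi⟩ : ∃ i, m i ≠ 2 := by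
      by_contra! h
      exact Bool.false_ne_true (hm ((h _).trans (h _).symm))
    exact ⟨.inl i, hi⟩

theorem posCount_clique (m : Bool → Fin 3) (j : Fin (2 * n + 1)) :
    posCount (chaseGraph n r) (chaseType n r) (Sum.map m id) (.inr (.clique j)) = 2 * n := by
  rw [posCount, card_filter_agents _ true]
  simp [chaseGraph, chaseAdj, chaseType, filter_ne]

theorem negCountAll_clique_le (m : Bool → Fin 3) (j : Fin (2 * n + 1)) :
    negCountAll (chaseGraph n r) (chaseType n r) (Sum.map m id) (.inr (.clique j)) ≤ 2 := by
  rw [negCountAll, card_filter_agents _ true]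
  have hmovers (P Q : Prop) [Decidable P] [Decidable Q] :
      (if P then 1 else 0) + (if Q then 1 else 0) ≤ 2 := by
    split_ifs <;> simp
  simpa [chaseGraph, chaseAdj, chaseType] using hmovers _ _

theorem le_sameTypeRatio_clique (m : Bool → Fin 3) (j : Fin (2 * n + 1)) :
    n / (n + 1) ≤
      sameTypeRatio (chaseGraph n r) (chaseType n r) (Sum.map m id) (.inr (.clique j)) := by
  rcases n.eq_zero_or_pos with rfl | hn
  · simpa using sameTypeRatio_nonneg
  · have hneg : (negCountAll (chaseGraph n r) (chaseType n r) (Sum.map m id)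
        (.inr (.clique j)) : ℝ) ≤ 2 := mod_cast negCountAll_clique_le m j
    calc (n : ℝ) / (n + 1) = (2 * n : ℕ) / ((2 * n : ℕ) + 2) := by
          push_cast
          field_simp
      _ ≤ sameTypeRatio _ _ _ _ := by
          rw [sameTypeRatio, posCount_clique]
          gcongr

theorem costAll_loner (hτ : 0 ≤ τ) (p : Bool ⊕ Resident n r → Fin 3 ⊕ Resident n r) (x : Fin r) :
    costAll (chaseGraph n r) (chaseType n r) τ p (.inr (.loner x)) = τ := by
  refine costAll_eq_of_unique_type hτ ?_
  rintro (_ | _ | _ | _) <;> simp [chaseType, Fin.ext_iff]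

theorem costAll_resident_le (hτ0 : 0 ≤ τ) (hτ : τ ≤ n / (n + 1)) (hm : Function.Injective m)
    (x : Resident n r) (q : Bool ⊕ Resident n r → Fin 3 ⊕ Resident n r) :
    costAll (chaseGraph n r) (chaseType n r) τ (Sum.map m id) (.inr x) ≤
      costAll (chaseGraph n r) (chaseType n r) τ q (.inr x) := by
  cases x with
  | hub =>
    have hτ1 : τ ≤ 1 := hτ.trans (div_le_one_of_le₀ (by simp) (by positivity))
    rw [costAll_eq_zero hτ0 (hτ1.trans_eq (sameTypeRatio_hub hm).symm)]
    exact costAll_nonneg hτ0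
  | clique j =>
    rw [costAll_eq_zero hτ0 (hτ.trans (le_sameTypeRatio_clique m j))]
    exact costAll_nonneg hτ0
  | loner x => rw [costAll_loner hτ0, costAll_loner hτ0]

theorem not_reachesStableJump_chase (hn : 0 < n) (hlow : 1 / (n + 1) < τ) (hupp : τ ≤ n / (n + 1))
    (hm : Function.Injective m) :
    ¬ ReachesStableJump (costAll (chaseGraph n r) (chaseType n r) τ) (Sum.map m id) :=
  not_reachesStableJump_sumMap
    (fun _ hm => costAll_resident_le (le_trans (by positivity) hlow.le) hupp hm)
    (fun _ hm => exists_improvingJump_movers hn hlow hm) hm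

theorem exists_one_div_lt_le_div (hτ0 : 0 < τ) (hτ1 : τ < 1) :
    ∃ n : ℕ, 0 < n ∧ 1 / (n + 1) < τ ∧ τ ≤ n / (n + 1) := by
  obtain ⟨n, hn⟩ := exists_nat_one_div_lt (lt_min hτ0 (sub_pos.2 hτ1))
  obtain ⟨hlow, hupp⟩ := lt_min_iff.1 hn
  have hcompl : (n : ℝ) / (n + 1) = 1 - 1 / (n + 1) := by
    field_simp
    ring
  refine ⟨n, Nat.pos_of_ne_zero ?_, hlow, by linarith⟩
  rintro rfl
  norm_num at hlow
  linarith

end Chase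

/-- For every `k ≥ 2` and every `τ ∈ (0,1)` there are a graph, `k` surjectively used agent
types on `|A| < |V|` agents and an injective placement `p₀` from which no finite sequence
of improving jumps of the `1`-`k`-JSG reaches a jump-stable placement, i.e., the
`1`-`k`-JSG is not weakly acyclic on arbitrary networks. -/
theorem statement8 (k : ℕ) (hk : 2 ≤ k) (τ : ℝ) (hτ0 : 0 < τ) (hτ1 : τ < 1) :
    ∃ (N M : ℕ) (G : SimpleGraph (Fin N)) (t : Fin M → Fin k) (p₀ : Fin M → Fin N),
      M < N ∧ Function.Surjective t ∧ Function.Injective p₀ ∧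
      ¬ ReachesStableJump (costAll G t τ) p₀ := by
  obtain ⟨r, rfl⟩ := Nat.exists_eq_add_of_le' hk
  obtain ⟨n, hn, hlow, hupp⟩ := exists_one_div_lt_le_div hτ0 hτ1
  let m₀ : Bool → Fin 3 := fun b => if b then 0 else 1
  have hm₀ : Function.Injective m₀ := by decide
  exact exists_fin_not_reachesStableJump (by simp) (chaseType_surjective n r)
    (Sum.map_injective.2 ⟨hm₀, Function.injective_id⟩)
    (not_reachesStableJump_chase hn hlow hupp hm₀)

end Schelling
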